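/- There exists a constant c > 0, depending only on the dimension n, with the following property: if ψ : ℝⁿ → ℝ is Lipschitz on the closed ball B̄_R, h is a harmonic replacement of ψ in B_R, and ∫_{B_R} ‖Dh‖² dx < ∞, then c ∫_{B_R} ‖Dψ − Dh‖² dx ≤ ∫_{B_R} (‖Dψ‖² − ‖Dh‖²) dx. -/

import Mathlib

open MeasureTheory Metric Set Filter
/-- `h` is a harmonic replacement of `ψ` in the ball `B_R(x₀)`: it is continuous on the
closed ball, `C²` on the open ball with vanishing Laplacian (the trace of the second
derivative) there, and agrees with `ψ` on the sphere. -/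
def IsHarmRep (n : ℕ) (ψ h : EuclideanSpace ℝ (Fin n) → ℝ)
    (x₀ : EuclideanSpace ℝ (Fin n)) (R : ℝ) : Prop :=
  ContinuousOn h (closedBall x₀ R) ∧
  ContDiffOn ℝ 2 h (ball x₀ R) ∧
  (∀ x ∈ ball x₀ R,
    ∑ i : Fin n, fderiv ℝ (fderiv ℝ h) x (EuclideanSpace.single i 1)
      (EuclideanSpace.single i 1) = 0) ∧
  ∀ x ∈ sphere x₀ R, h x = ψ x

/-!
With `w = ψ - h`, harmonicity of `h` should make `∇w` orthogonal to `∇h` in `L²`, whence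
`∫ ‖∇ψ‖² = ∫ ‖∇ψ - ∇h‖² + ∫ ‖∇h‖²`, so that `c = 1` works. As `∇h` is not controlled near the
boundary, `w` itself is not an admissible test function. Soft thresholding `w` at a level `ε > 0`
gives a compactly supported Lipschitz function, whose gradient is almost everywhere `∇w` where
`|w| > ε` and `0` elsewhere. Testing with it yields the Pythagorean identity on `{|w| > ε}`, and
monotone convergence as `ε → 0` yields it on `{w ≠ 0}`. On `{w = 0}` the identity is trivial, since
there `∇ψ = ∇h` almost everywhere.
-/

open InnerProductSpace
open scoped ContDiff Gradient Laplacian NNReal Topology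

section LocallyLipschitz

theorem locallyLipschitzOn_comp {α β γ : Type*} [PseudoEMetricSpace α] [PseudoEMetricSpace β]
    [PseudoEMetricSpace γ] {g : β → γ} {f : α → β} {s : Set α} (hg : LocallyLipschitz g)
    (hf : LocallyLipschitzOn s f) : LocallyLipschitzOn s (g ∘ f) := by
  intro x hx
  obtain ⟨Kf, t, ht, hft⟩ := hf hx
  obtain ⟨Kg, u, hu, hgu⟩ := hg (f x)
  exact ⟨Kg * Kf, t ∩ f ⁻¹' u, inter_mem ht ((hf.continuousOn x hx).preimage_mem_nhdsWithin hu),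
    hgu.comp (hft.mono inter_subset_left) ((mapsTo_preimage f u).mono_left inter_subset_right)⟩

theorem locallyLipschitzOn_congr {α β : Type*} [PseudoEMetricSpace α] [PseudoEMetricSpace β]
    {f g : α → β} {s : Set α} (hfg : EqOn f g s) (hg : LocallyLipschitzOn s g) :
    LocallyLipschitzOn s f := by
  intro x hx
  obtain ⟨K, t, ht, hgt⟩ := hg hx
  refine ⟨K, t ∩ s, inter_mem ht self_mem_nhdsWithin, fun y hy z hz ↦ ?_⟩
  rw [hfg hy.2, hfg hz.2]
  exact hgt hy.1 hz.1

theorem locallyLipschitzOn_of_contDiffOn {E F : Type*} [NormedAddCommGroup E] [NormedSpace ℝ E]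
    [NormedAddCommGroup F] [NormedSpace ℝ F] {f : E → F} {U : Set E} (hU : IsOpen U)
    (hf : ContDiffOn ℝ 1 f U) : LocallyLipschitzOn U f := fun x hx ↦ by
  obtain ⟨K, t, ht, hft⟩ := (hf.contDiffAt (hU.mem_nhds hx)).exists_lipschitzOnWith
  exact ⟨K, t, mem_nhdsWithin_of_mem_nhds ht, hft⟩

theorem locallyLipschitz_of_tsupport_subset {α F : Type*} [PseudoEMetricSpace α]
    [SeminormedAddCommGroup F] {f : α → F} {s : Set α} (hs : IsOpen s)
    (hf : LocallyLipschitzOn s f) (hfs : tsupport f ⊆ s) : LocallyLipschitz f := by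
  intro x
  by_cases hx : x ∈ s
  · obtain ⟨K, t, ht, hft⟩ := hf hx
    exact ⟨K, t, hs.nhdsWithin_eq hx ▸ ht, hft⟩
  · refine ⟨0, (tsupport f)ᶜ, (isClosed_tsupport f).isOpen_compl.mem_nhds fun h ↦ hx (hfs h), ?_⟩
    intro y hy z hz
    simp [image_eq_zero_of_notMem_tsupport hy, image_eq_zero_of_notMem_tsupport hz]

theorem exists_lipschitzWith_of_hasCompactSupport {α F : Type*} [PseudoMetricSpace α]
    [ProperSpace α] [NormedAddCommGroup F] {f : α → F} (hf : LocallyLipschitz f)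
    (hfc : HasCompactSupport f) : ∃ K, LipschitzWith K f := by
  obtain ⟨K, hK⟩ :=
    hf.locallyLipschitzOn.exists_lipschitzOnWith_of_compact (hfc.cthickening (r := 1))
  obtain ⟨C, hC⟩ := hf.continuous.bounded_above_of_compact_support hfc
  have hC₀ : ∀ x, ‖f x‖ ≤ C.toNNReal := fun x ↦ (hC x).trans (Real.le_coe_toNNReal C)
  -- Points at distance at most one from the support lie in a common compact set; for points
  -- further apart the oscillation of `f` is at most `2 * C`.
  have hdist : ∀ x ∈ tsupport f, ∀ y, dist (f x) (f y) ≤ ↑(max K (2 * C.toNNReal)) * dist x y := by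
    intro x hx y
    rw [NNReal.coe_max, NNReal.coe_mul, NNReal.coe_ofNat]
    rcases le_total (dist x y) 1 with hxy | hxy
    · calc dist (f x) (f y) ≤ K * dist x y :=
            hK.dist_le_mul x (self_subset_cthickening _ hx) y
              (mem_cthickening_of_dist_le y x 1 _ hx (dist_comm x y ▸ hxy))
        _ ≤ _ := by gcongr; exact le_max_left _ _
    · calc dist (f x) (f y) ≤ 2 * C.toNNReal := by
            linarith [dist_le_norm_add_norm (f x) (f y), hC₀ x, hC₀ y]
        _ ≤ (2 * C.toNNReal) * dist x y := le_mul_of_one_le_right (by positivity) hxy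
        _ ≤ _ := by gcongr; exact le_max_right _ _
  refine ⟨max K (2 * C.toNNReal), LipschitzWith.of_dist_le_mul fun x y ↦ ?_⟩
  by_cases hx : x ∈ tsupport f
  · exact hdist x hx y
  by_cases hy : y ∈ tsupport f
  · rw [dist_comm (f x), dist_comm x]
    exact hdist y hy x
  · rw [image_eq_zero_of_notMem_tsupport hx, image_eq_zero_of_notMem_tsupport hy, dist_self]
    positivity

end LocallyLipschitz

section Rademacher

variable {E F : Type*} [NormedAddCommGroup E] [NormedSpace ℝ E]
  [NormedAddCommGroup F] [NormedSpace ℝ F]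

theorem hasFDerivAt_zero_of_differentiableAt_norm {f : E → F} {x : E} (hx : f x = 0)
    (hf : DifferentiableAt ℝ (fun y ↦ ‖f y‖) x) : HasFDerivAt f (0 : E →L[ℝ] F) x := by
  have hmin : IsLocalMin (fun y ↦ ‖f y‖) x := .of_forall fun y ↦ by simp [hx]
  have hnorm := hf.hasFDerivAt
  rw [hmin.fderiv_eq_zero, hasFDerivAt_iff_isLittleO] at hnorm
  rw [hasFDerivAt_iff_isLittleO]
  simpa [hx] using hnorm

variable [FiniteDimensional ℝ E] [MeasurableSpace E] [BorelSpace E] {μ : Measure E}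
  [μ.IsAddHaarMeasure] {U : Set E}

theorem ae_differentiableAt_of_locallyLipschitzOn [FiniteDimensional ℝ F] {f : E → F}
    (hU : IsOpen U) (hf : LocallyLipschitzOn U f) :
    ∀ᵐ x ∂μ, x ∈ U → DifferentiableAt ℝ f x := by
  suffices μ {x | x ∈ U ∧ ¬DifferentiableAt ℝ f x} = 0 by
    simpa [ae_iff] using this
  refine measure_null_of_locally_null _ fun x hx ↦ ?_
  obtain ⟨K, t, ht, hft⟩ := hf hx.1
  have htx : interior t ∈ 𝓝 x := interior_mem_nhds.2 (hU.nhdsWithin_eq hx.1 ▸ ht)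
  refine ⟨_, inter_mem_nhdsWithin _ htx, ?_⟩
  refine measure_mono_null ?_
    (ae_iff.1 ((hft.mono interior_subset).ae_differentiableWithinAt_of_mem (μ := μ)))
  exact fun y hy h ↦ hy.1.2 ((h hy.2).differentiableAt (isOpen_interior.mem_nhds hy.2))

theorem ae_fderiv_eq_zero_of_eq_zero {f : E → F} (hU : IsOpen U) (hf : LocallyLipschitzOn U f) :
    ∀ᵐ x ∂μ, x ∈ U → f x = 0 → fderiv ℝ f x = 0 := by
  have hnorm : LocallyLipschitzOn U fun x ↦ ‖f x‖ :=
    locallyLipschitzOn_comp lipschitzWith_one_norm.locallyLipschitz hf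
  filter_upwards [ae_differentiableAt_of_locallyLipschitzOn hU hnorm] with x hx hxU hfx
  exact (hasFDerivAt_zero_of_differentiableAt_norm hfx (hx hxU)).fderiv

end Rademacher

section Cutoff

theorem exists_contDiff_hasCompactSupport_eventuallyEq {E F : Type*} [NormedAddCommGroup E]
    [NormedSpace ℝ E] [FiniteDimensional ℝ E] [NormedAddCommGroup F] [NormedSpace ℝ F] {n : ℕ∞}
    {f : E → F} {K U : Set E} (hK : IsCompact K) (hU : IsOpen U) (hKU : K ⊆ U)
    (hf : ContDiffOn ℝ n f U) :
    ∃ g : E → F, ContDiff ℝ n g ∧ HasCompactSupport g ∧ ∀ x ∈ K, g =ᶠ[𝓝 x] f := by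
  obtain ⟨L, hL, hKL, hLU⟩ := exists_compact_between hK hU hKU
  obtain ⟨χ, hχ_one, hχ_zero, -⟩ :=
    exists_contMDiffMap_one_nhds_of_subset_interior (n := n) (modelWithCornersSelf ℝ E)
      hK.isClosed hKL
  have hχL : tsupport χ ⊆ L := closure_minimal
    (fun x hx ↦ by_contra fun hxL ↦ hx (hχ_zero x hxL)) hL.isClosed
  refine ⟨fun x ↦ χ x • f x, contDiff_iff_contDiffAt.2 fun x ↦ ?_, ?_, fun x hx ↦ ?_⟩
  · by_cases hx : x ∈ U
    · exact χ.contMDiff.contDiff.contDiffAt.smul (hf.contDiffAt (hU.mem_nhds hx))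
    · have : χ =ᶠ[𝓝 x] 0 := notMem_tsupport_iff_eventuallyEq.1 fun h ↦ hx (hLU (hχL h))
      exact (contDiffAt_const (c := (0 : F))).congr_of_eventuallyEq
        (this.mono fun y hy ↦ by simp [hy])
  · exact (HasCompactSupport.intro hL hχ_zero).smul_right
  · filter_upwards [hχ_one.filter_mono (nhds_le_nhdsSet hx)] with y hy
    rw [hy, one_smul]

end Cutoff

section Green

variable {E : Type*} [NormedAddCommGroup E] [InnerProductSpace ℝ E] [MeasurableSpace E]
  [BorelSpace E] {μ : Measure E} {f g : E → ℝ} {C : ℝ≥0}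

theorem integrable_lineDeriv_mul (hf : LipschitzWith C f) (hg : Integrable g μ) (v : E) :
    Integrable (fun x ↦ lineDeriv ℝ f x v * g x) μ :=
  hg.bdd_mul (measurable_lineDeriv hf.continuous).aestronglyMeasurable
    (ae_of_all _ fun _ ↦ norm_lineDeriv_le_of_lipschitz ℝ hf)

variable [FiniteDimensional ℝ E] [μ.IsAddHaarMeasure]

theorem integral_lineDeriv_mul_fderiv_apply (hf : LipschitzWith C f) (hg : ContDiff ℝ 2 g)
    (hgc : HasCompactSupport g) (v : E) :
    ∫ x, lineDeriv ℝ f x v * fderiv ℝ g x v ∂μ =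
      -∫ x, f x * iteratedFDeriv ℝ 2 g x ![v, v] ∂μ := by
  have hdg : ContDiff ℝ 1 (fderiv ℝ g) := hg.fderiv_right (by norm_num)
  have hdgv : ContDiff ℝ 1 fun x ↦ fderiv ℝ g x v := hdg.clm_apply contDiff_const
  have hdgc : HasCompactSupport fun x ↦ fderiv ℝ g x v := hgc.fderiv_apply ℝ v
  obtain ⟨D, hD⟩ := hdgv.lipschitzWith_of_hasCompactSupport hdgc one_ne_zero
  rw [hf.integral_lineDeriv_mul_eq hD hdgc v, ← integral_neg]
  refine integral_congr_ae (ae_of_all _ fun x ↦ ?_)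
  have hd : DifferentiableAt ℝ (fderiv ℝ g) x := hdg.differentiable one_ne_zero x
  simp only [(hdgv.differentiable one_ne_zero x).lineDeriv_eq_fderiv,
    fderiv_clm_apply hd (differentiableAt_const v), iteratedFDeriv_two_apply]
  simp [mul_comm]

theorem integral_inner_gradient_eq_neg_integral_mul_laplacian (hf : LipschitzWith C f)
    (hg : ContDiff ℝ 2 g) (hgc : HasCompactSupport g) :
    ∫ x, ⟪∇ f x, ∇ g x⟫_ℝ ∂μ = -∫ x, f x * Δ g x ∂μ := by
  let b := stdOrthonormalBasis ℝ E
  have hinner : ∀ᵐ x ∂μ, ⟪∇ f x, ∇ g x⟫_ℝ = ∑ i, lineDeriv ℝ f x (b i) * fderiv ℝ g x (b i) := by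
    filter_upwards [hf.ae_differentiableAt] with x hx
    rw [← b.sum_inner_mul_inner]
    refine Finset.sum_congr rfl fun i _ ↦ ?_
    rw [real_inner_comm (∇ g x), inner_gradient_left, inner_gradient_left, hx.lineDeriv_eq_fderiv]
  have hint_left (i) : Integrable (fun x ↦ lineDeriv ℝ f x (b i) * fderiv ℝ g x (b i)) μ :=
    integrable_lineDeriv_mul hf (((hg.continuous_fderiv two_ne_zero).clm_apply
      continuous_const).integrable_of_hasCompactSupport (hgc.fderiv_apply ℝ (b i))) (b i)
  have hint_right (i) : Integrable (fun x ↦ f x * iteratedFDeriv ℝ 2 g x ![b i, b i]) μ := by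
    let ev := ContinuousMultilinearMap.apply ℝ (fun _ : Fin 2 ↦ E) ℝ ![b i, b i]
    have hcont : Continuous (ev ∘ iteratedFDeriv ℝ 2 g) :=
      ev.continuous.comp (hg.continuous_iteratedFDeriv le_rfl)
    have hsupp : HasCompactSupport (ev ∘ iteratedFDeriv ℝ 2 g) :=
      (hgc.iteratedFDeriv 2).comp_left ev.map_zero
    exact (hf.continuous.mul hcont).integrable_of_hasCompactSupport hsupp.mul_left
  calc ∫ x, ⟪∇ f x, ∇ g x⟫_ℝ ∂μ
      = ∑ i, ∫ x, lineDeriv ℝ f x (b i) * fderiv ℝ g x (b i) ∂μ := by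
        rw [integral_congr_ae hinner, integral_finsetSum _ fun i _ ↦ hint_left i]
    _ = -∑ i, ∫ x, f x * iteratedFDeriv ℝ 2 g x ![b i, b i] ∂μ := by
        simp only [integral_lineDeriv_mul_fderiv_apply hf hg hgc, Finset.sum_neg_distrib]
    _ = -∫ x, f x * Δ g x ∂μ := by
        rw [← integral_finsetSum _ fun i _ ↦ hint_right i]
        simp only [laplacian_eq_iteratedFDeriv_stdOrthonormalBasis, Finset.mul_sum, b]

end Green

section Harmonic

variable {E : Type*} [NormedAddCommGroup E] [InnerProductSpace ℝ E] [FiniteDimensional ℝ E]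
  [MeasurableSpace E] [BorelSpace E] {μ : Measure E} [μ.IsAddHaarMeasure] {f h : E → ℝ}
  {U : Set E}

theorem integral_inner_gradient_eq_zero_of_harmonicOnNhd {C : ℝ≥0} (hU : IsOpen U)
    (hh : HarmonicOnNhd h U) (hf : LipschitzWith C f) (hfc : HasCompactSupport f)
    (hfU : tsupport f ⊆ U) : ∫ x, ⟪∇ f x, ∇ h x⟫_ℝ ∂μ = 0 := by
  have hh₂ : ContDiffOn ℝ 2 h U := fun x hx ↦ (hh x hx).1.contDiffWithinAt
  obtain ⟨g, hg, hgc, hgh⟩ := exists_contDiff_hasCompactSupport_eventuallyEq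
    (n := 2) hfc hU hfU hh₂
  have hΔ : ∀ x, f x * Δ g x = 0 := fun x ↦ by
    by_cases hx : x ∈ tsupport f
    · rw [(laplacian_congr_nhds (hgh x hx)).eq_of_nhds, (hh x (hfU hx)).2.eq_of_nhds,
        Pi.zero_apply, mul_zero]
    · rw [image_eq_zero_of_notMem_tsupport hx, zero_mul]
  have hgrad : ∀ x, ⟪∇ f x, ∇ h x⟫_ℝ = ⟪∇ f x, ∇ g x⟫_ℝ := fun x ↦ by
    by_cases hx : x ∈ tsupport f
    · rw [(hgh x hx).gradient_eq]
    · rw [gradient, fderiv_of_notMem_tsupport ℝ hx, map_zero, inner_zero_left, inner_zero_left]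
  simp only [hgrad, integral_inner_gradient_eq_neg_integral_mul_laplacian hf hg hgc, hΔ,
    integral_zero, neg_zero]

end Harmonic

section SoftThreshold

/-- Soft thresholding at level `ε`: for `0 ≤ ε` the values in `[-ε, ε]` are sent to `0` and all
other values are moved by `ε` towards `0`. It is used to cut a function that vanishes on the
boundary of a domain down to a compactly supported one. -/
def softThreshold (ε t : ℝ) : ℝ := max (t - ε) 0 + min (t + ε) 0

variable {ε t : ℝ}

theorem locallyLipschitz_softThreshold : LocallyLipschitz (softThreshold ε) :=
  have hsub : LipschitzWith 1 fun t : ℝ ↦ t - ε := LipschitzWith.of_dist_le_mul fun s t ↦ by simp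
  have hadd : LipschitzWith 1 fun t : ℝ ↦ t + ε := LipschitzWith.of_dist_le_mul fun s t ↦ by simp
  ((hsub.max_const 0).add (hadd.min_const 0)).locallyLipschitz

theorem softThreshold_eq_zero (ht : |t| ≤ ε) : softThreshold ε t = 0 := by
  rw [softThreshold, max_eq_right (by linarith [le_of_abs_le ht]),
    min_eq_right (by linarith [neg_le_of_abs_le ht]), add_zero]

theorem hasDerivAt_softThreshold (hε : 0 ≤ ε) (ht : ε < |t|) :
    HasDerivAt (softThreshold ε) 1 t := by
  rcases lt_abs.1 ht with ht | ht
  · refine ((hasDerivAt_id t).sub_const ε).congr_of_eventuallyEq ?_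
    filter_upwards [lt_mem_nhds ht] with s hs
    rw [softThreshold, max_eq_left (sub_nonneg.2 hs.le), min_eq_right (by linarith), add_zero, id]
  · refine ((hasDerivAt_id t).add_const ε).congr_of_eventuallyEq ?_
    filter_upwards [gt_mem_nhds (lt_neg_of_lt_neg ht)] with s hs
    rw [softThreshold, max_eq_right (by linarith), min_eq_left (by linarith), zero_add, id]

end SoftThreshold

section Truncation

theorem setOf_le_abs_subset {α : Type*} {U : Set α} {w : α → ℝ} {ε : ℝ} (hε : 0 < ε)
    (hwU : Function.support w ⊆ U) : {x | ε ≤ |w x|} ⊆ U :=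
  fun _ hx ↦ hwU (abs_pos.1 (hε.trans_le hx))

variable {E : Type*} [NormedAddCommGroup E] {U : Set E} {w : E → ℝ} {ε : ℝ}

theorem isCompact_setOf_le_abs [ProperSpace E] (hε : 0 < ε) (hU : Bornology.IsBounded U)
    (hw : Continuous w) (hwU : Function.support w ⊆ U) : IsCompact {x | ε ≤ |w x|} :=
  isCompact_of_isClosed_isBounded (isClosed_le continuous_const hw.abs)
    (hU.subset (setOf_le_abs_subset hε hwU))

theorem tsupport_softThreshold_comp_subset (hw : Continuous w) :
    tsupport (softThreshold ε ∘ w) ⊆ {x | ε ≤ |w x|} :=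
  closure_minimal (fun _ hx ↦ le_of_not_ge fun hx' ↦ hx (softThreshold_eq_zero hx'))
    (isClosed_le continuous_const hw.abs)

theorem hasCompactSupport_softThreshold_comp [ProperSpace E] (hε : 0 < ε)
    (hU : Bornology.IsBounded U) (hw : Continuous w) (hwU : Function.support w ⊆ U) :
    HasCompactSupport (softThreshold ε ∘ w) :=
  (isCompact_setOf_le_abs hε hU hw hwU).of_isClosed_subset (isClosed_tsupport _)
    (tsupport_softThreshold_comp_subset hw)

theorem exists_lipschitzWith_softThreshold_comp [ProperSpace E] (hε : 0 < ε) (hUo : IsOpen U)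
    (hU : Bornology.IsBounded U) (hw : Continuous w) (hwU : Function.support w ⊆ U)
    (hwL : LocallyLipschitzOn U w) : ∃ K, LipschitzWith K (softThreshold ε ∘ w) :=
  exists_lipschitzWith_of_hasCompactSupport
    (locallyLipschitz_of_tsupport_subset hUo
      (locallyLipschitzOn_comp locallyLipschitz_softThreshold hwL)
      ((tsupport_softThreshold_comp_subset hw).trans (setOf_le_abs_subset hε hwU)))
    (hasCompactSupport_softThreshold_comp hε hU hw hwU)

variable [InnerProductSpace ℝ E] [FiniteDimensional ℝ E] [MeasurableSpace E] [BorelSpace E]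
  {μ : Measure E} [μ.IsAddHaarMeasure]

theorem ae_gradient_softThreshold_comp_eq_indicator (hε : 0 < ε) (hUo : IsOpen U)
    (hU : Bornology.IsBounded U) (hw : Continuous w) (hwU : Function.support w ⊆ U)
    (hwL : LocallyLipschitzOn U w) :
    ∇ (softThreshold ε ∘ w) =ᵐ[μ] {x | ε < |w x|}.indicator (∇ w) := by
  obtain ⟨K, hK⟩ := exists_lipschitzWith_softThreshold_comp hε hUo hU hw hwU hwL
  filter_upwards [ae_differentiableAt_of_locallyLipschitzOn (μ := μ) hUo hwL,
    ae_fderiv_eq_zero_of_eq_zero (μ := μ) isOpen_univ hK.locallyLipschitz.locallyLipschitzOn]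
    with x hdiff hzero
  by_cases hx : ε < |w x|
  · have hwx : DifferentiableAt ℝ w x :=
      hdiff (setOf_le_abs_subset hε hwU (le_of_lt hx))
    rw [indicator_of_mem (s := {x | ε < |w x|}) hx, gradient, gradient,
      ((hasDerivAt_softThreshold hε.le hx).comp_hasFDerivAt x hwx.hasFDerivAt).fderiv, one_smul]
  · rw [indicator_of_notMem (s := {x | ε < |w x|}) hx, gradient,
      hzero (mem_univ x) (softThreshold_eq_zero (not_lt.1 hx)), map_zero]

theorem setIntegral_inner_gradient_eq_zero_of_harmonicOnNhd {h : E → ℝ} (hε : 0 < ε)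
    (hUo : IsOpen U) (hU : Bornology.IsBounded U) (hw : Continuous w)
    (hwU : Function.support w ⊆ U) (hwL : LocallyLipschitzOn U w) (hh : HarmonicOnNhd h U) :
    ∫ x in {x | ε < |w x|}, ⟪∇ w x, ∇ h x⟫_ℝ ∂μ = 0 := by
  obtain ⟨K, hK⟩ := exists_lipschitzWith_softThreshold_comp hε hUo hU hw hwU hwL
  rw [← integral_indicator (measurableSet_lt measurable_const hw.measurable.abs),
    ← integral_inner_gradient_eq_zero_of_harmonicOnNhd (μ := μ) hUo hh hK
      (hasCompactSupport_softThreshold_comp hε hU hw hwU)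
      ((tsupport_softThreshold_comp_subset hw).trans (setOf_le_abs_subset hε hwU))]
  refine integral_congr_ae ?_
  filter_upwards [ae_gradient_softThreshold_comp_eq_indicator (μ := μ) hε hUo hU hw hwU hwL]
    with x hx
  rw [hx]
  by_cases hxε : x ∈ {x | ε < |w x|} <;> simp [hxε]

end Truncation

section Integration

theorem integral_norm_sub_sq_add_norm_sq {α F : Type*} [MeasurableSpace α] {μ : Measure α}
    [NormedAddCommGroup F] [InnerProductSpace ℝ F] {u v : α → F} (hu : MemLp u 2 μ)
    (hv : MemLp v 2 μ) (huv : ∫ x, ⟪u x - v x, v x⟫_ℝ ∂μ = 0) :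
    ∫ x, (‖u x - v x‖ ^ 2 + ‖v x‖ ^ 2) ∂μ = ∫ x, ‖u x‖ ^ 2 ∂μ := by
  have hu₂ := hu.integrable_norm_pow two_ne_zero
  have hv₂ := hv.integrable_norm_pow two_ne_zero
  have huv₂ : Integrable (fun x ↦ ‖u x - v x‖ ^ 2 + ‖v x‖ ^ 2) μ :=
    ((hu.sub hv).integrable_norm_pow two_ne_zero).add hv₂
  have hpolar : ∀ x, ‖u x‖ ^ 2 - (‖u x - v x‖ ^ 2 + ‖v x‖ ^ 2) = 2 * ⟪u x - v x, v x⟫_ℝ := by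
    intro x
    have := norm_add_sq_real (u x - v x) (v x)
    rw [sub_add_cancel] at this
    linarith
  rw [eq_comm, ← sub_eq_zero, ← integral_sub hu₂ huv₂]
  simp only [hpolar, integral_const_mul, huv, mul_zero]

theorem integrableOn_and_setIntegral_eq_of_ae_eq_diff {α : Type*} [MeasurableSpace α]
    {μ : Measure α} {f g : α → ℝ} {s t : Set α} (hs : MeasurableSet s) (ht : MeasurableSet t)
    (hts : t ⊆ s) (hg : IntegrableOn g s μ) (hf : IntegrableOn f t μ)
    (hfg : ∫ x in t, f x ∂μ = ∫ x in t, g x ∂μ) (hdiff : ∀ᵐ x ∂μ, x ∈ s \ t → f x = g x) :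
    IntegrableOn f s μ ∧ ∫ x in s, f x ∂μ = ∫ x in s, g x ∂μ := by
  have hst : MeasurableSet (s \ t) := hs.diff ht
  have hg_diff : IntegrableOn g (s \ t) μ := hg.mono_set sdiff_subset
  have hf_diff : IntegrableOn f (s \ t) μ :=
    hg_diff.congr_fun_ae ((ae_restrict_iff' hst).2 (hdiff.mono fun x hx hxs ↦ (hx hxs).symm))
  rw [← union_sdiff_cancel hts]
  refine ⟨hf.union hf_diff, ?_⟩
  rw [setIntegral_union disjoint_sdiff_right hst hf hf_diff,
    setIntegral_union disjoint_sdiff_right hst (hg.mono_set hts) hg_diff, hfg,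
    setIntegral_congr_ae hst hdiff]

theorem integrable_and_integral_eq_of_aecover {α : Type*} [MeasurableSpace α] {μ : Measure α}
    {φ : ℕ → Set α} {f g : α → ℝ} (hφ : AECover μ atTop φ) (hf : 0 ≤ᵐ[μ] f)
    (hfφ : ∀ k, IntegrableOn f (φ k) μ) (hg : Integrable g μ)
    (hfg : ∀ k, ∫ x in φ k, f x ∂μ = ∫ x in φ k, g x ∂μ) :
    Integrable f μ ∧ ∫ x, f x ∂μ = ∫ x, g x ∂μ := by
  have hlim : Tendsto (fun k ↦ ∫ x in φ k, f x ∂μ) atTop (𝓝 (∫ x, g x ∂μ)) := by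
    simpa only [hfg] using hφ.integral_tendsto_of_countably_generated hg
  exact ⟨hφ.integrable_of_integral_tendsto_of_nonneg_ae _ hfφ hf hlim,
    hφ.integral_eq_of_tendsto_of_nonneg_ae _ hf hfφ hlim⟩

theorem aecover_setOf_lt_abs {α : Type*} [MeasurableSpace α] {μ : Measure α} {w : α → ℝ}
    (hw : Measurable w) :
    AECover (μ.restrict (Function.support w)) atTop fun k : ℕ ↦ {x | 1 / (k + 1 : ℝ) < |w x|} where
  ae_eventually_mem := by
    filter_upwards [ae_restrict_mem (measurableSet_support hw)] with x hx
    exact tendsto_one_div_add_atTop_nhds_zero_nat.eventually_lt_const (abs_pos.2 hx)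
  measurableSet _ := measurableSet_lt measurable_const hw.abs

end Integration

section Energy

variable {E : Type*} [NormedAddCommGroup E] [InnerProductSpace ℝ E] [FiniteDimensional ℝ E]

theorem norm_gradient (f : E → ℝ) (x : E) : ‖∇ f x‖ = ‖fderiv ℝ f x‖ :=
  (toDual ℝ E).symm.norm_map _

theorem norm_gradient_sub_gradient (f g : E → ℝ) (x : E) :
    ‖∇ f x - ∇ g x‖ = ‖fderiv ℝ f x - fderiv ℝ g x‖ := by
  rw [gradient, gradient, ← map_sub, LinearIsometryEquiv.norm_map]

variable [MeasurableSpace E] [BorelSpace E] {μ : Measure E}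

theorem measurable_gradient (f : E → ℝ) : Measurable (∇ f) :=
  (toDual ℝ E).symm.continuous.measurable.comp (measurable_fderiv ℝ f)

theorem memLp_two_gradient_iff {f : E → ℝ} : MemLp (∇ f) 2 μ ↔ Integrable (‖∇ f ·‖ ^ 2) μ :=
  memLp_two_iff_integrable_sq_norm (measurable_gradient f).aestronglyMeasurable

theorem integrableOn_norm_gradient_sq_of_isCompact [IsFiniteMeasureOnCompacts μ] {h : E → ℝ}
    {U K : Set E} (hU : IsOpen U) (hK : IsCompact K) (hKU : K ⊆ U)
    (hh : ContDiffOn ℝ 1 h U) : IntegrableOn (fun x ↦ ‖∇ h x‖ ^ 2) K μ := by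
  have hgrad : ContinuousOn (∇ h) U :=
    (toDual ℝ E).symm.continuous.comp_continuousOn (hh.continuousOn_fderiv_of_isOpen hU le_rfl)
  exact ((hgrad.mono hKU).norm.pow 2).integrableOn_compact hK

variable [μ.IsAddHaarMeasure] {U : Set E} {ψ h w : E → ℝ}

theorem ae_gradient_sub (hU : IsOpen U) (hψ : LocallyLipschitzOn U ψ)
    (hh : DifferentiableOn ℝ h U) :
    ∀ᵐ x ∂μ, x ∈ U → ∇ (ψ - h) x = ∇ ψ x - ∇ h x := by
  filter_upwards [ae_differentiableAt_of_locallyLipschitzOn (μ := μ) hU hψ] with x hx hxU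
  rw [gradient, fderiv_sub (hx hxU) (hh.differentiableAt (hU.mem_nhds hxU)), map_sub]
  rfl

theorem gradient_pythagoras_superlevel {ε : ℝ} (hε : 0 < ε) (hUo : IsOpen U)
    (hU : Bornology.IsBounded U) (hψ : LocallyLipschitzOn U ψ)
    (hψE : IntegrableOn (‖∇ ψ ·‖ ^ 2) U μ)
    (hh : HarmonicOnNhd h U) (hw : Continuous w) (hwU : Function.support w ⊆ U)
    (hwψ : EqOn w (ψ - h) U) :
    IntegrableOn (fun x ↦ ‖∇ ψ x - ∇ h x‖ ^ 2 + ‖∇ h x‖ ^ 2) {x | ε < |w x|} μ ∧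
      ∫ x in {x | ε < |w x|}, (‖∇ ψ x - ∇ h x‖ ^ 2 + ‖∇ h x‖ ^ 2) ∂μ =
        ∫ x in {x | ε < |w x|}, ‖∇ ψ x‖ ^ 2 ∂μ := by
  set S := {x | ε < |w x|}
  have hSK : S ⊆ {x | ε ≤ |w x|} := fun x (hx : ε < |w x|) ↦ hx.le
  have hKU : {x | ε ≤ |w x|} ⊆ U := setOf_le_abs_subset hε hwU
  have hSm : MeasurableSet S := measurableSet_lt measurable_const hw.measurable.abs
  have hh₁ : ContDiffOn ℝ 1 h U := hh.contDiffOn.of_le one_le_two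
  have hψS : MemLp (∇ ψ) 2 (μ.restrict S) :=
    memLp_two_gradient_iff.2 (hψE.mono_set (hSK.trans hKU))
  have hhS : MemLp (∇ h) 2 (μ.restrict S) :=
    memLp_two_gradient_iff.2 ((integrableOn_norm_gradient_sq_of_isCompact hUo
      (isCompact_setOf_le_abs hε hU hw hwU) hKU hh₁).mono_set hSK)
  have hwL : LocallyLipschitzOn U w :=
    locallyLipschitzOn_congr hwψ (hψ.sub (locallyLipschitzOn_of_contDiffOn hUo hh₁))
  have horth : ∫ x in S, ⟪∇ ψ x - ∇ h x, ∇ h x⟫_ℝ ∂μ = 0 := by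
    rw [← setIntegral_inner_gradient_eq_zero_of_harmonicOnNhd (μ := μ) hε hUo hU hw hwU hwL hh]
    refine setIntegral_congr_ae hSm ?_
    filter_upwards [ae_gradient_sub (μ := μ) hUo hψ (hh₁.differentiableOn one_ne_zero)]
      with x hx hxS
    have hxU : x ∈ U := hKU (hSK hxS)
    rw [(hwψ.eventuallyEq_of_mem (hUo.mem_nhds hxU)).gradient_eq, hx hxU]
  exact ⟨((hψS.sub hhS).integrable_norm_pow two_ne_zero).add
    (hhS.integrable_norm_pow two_ne_zero), integral_norm_sub_sq_add_norm_sq hψS hhS horth⟩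

theorem gradient_pythagoras_support (hUo : IsOpen U) (hU : Bornology.IsBounded U)
    (hψ : LocallyLipschitzOn U ψ) (hψE : IntegrableOn (‖∇ ψ ·‖ ^ 2) U μ)
    (hh : HarmonicOnNhd h U) (hw : Continuous w) (hwU : Function.support w ⊆ U)
    (hwψ : EqOn w (ψ - h) U) :
    IntegrableOn (fun x ↦ ‖∇ ψ x - ∇ h x‖ ^ 2 + ‖∇ h x‖ ^ 2) (Function.support w) μ ∧
      ∫ x in Function.support w, (‖∇ ψ x - ∇ h x‖ ^ 2 + ‖∇ h x‖ ^ 2) ∂μ =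
        ∫ x in Function.support w, ‖∇ ψ x‖ ^ 2 ∂μ := by
  have hlevel (k : ℕ) := gradient_pythagoras_superlevel (Nat.one_div_pos_of_nat (n := k)) hUo hU hψ
    hψE hh hw hwU hwψ
  have hrestrict (k : ℕ) : (μ.restrict (Function.support w)).restrict {x | 1 / (k + 1 : ℝ) < |w x|}
      = μ.restrict {x | 1 / (k + 1 : ℝ) < |w x|} :=
    Measure.restrict_restrict_of_subset fun x hx ↦ abs_pos.1 (Nat.one_div_pos_of_nat.trans hx)
  refine integrable_and_integral_eq_of_aecover (aecover_setOf_lt_abs hw.measurable)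
    (ae_of_all _ fun x ↦ by positivity) (fun k ↦ ?_) (hψE.mono_set hwU) (fun k ↦ ?_)
  · rw [IntegrableOn, hrestrict]
    exact (hlevel k).1
  · rw [hrestrict]
    exact (hlevel k).2

theorem gradient_pythagoras (hUo : IsOpen U) (hU : Bornology.IsBounded U)
    (hψ : LocallyLipschitzOn U ψ) (hψE : IntegrableOn (‖∇ ψ ·‖ ^ 2) U μ)
    (hh : HarmonicOnNhd h U) (hw : Continuous w) (hwU : Function.support w ⊆ U)
    (hwψ : EqOn w (ψ - h) U) :
    IntegrableOn (fun x ↦ ‖∇ ψ x - ∇ h x‖ ^ 2 + ‖∇ h x‖ ^ 2) U μ ∧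
      ∫ x in U, (‖∇ ψ x - ∇ h x‖ ^ 2 + ‖∇ h x‖ ^ 2) ∂μ = ∫ x in U, ‖∇ ψ x‖ ^ 2 ∂μ := by
  have hh₁ : ContDiffOn ℝ 1 h U := hh.contDiffOn.of_le one_le_two
  obtain ⟨hint, heq⟩ := gradient_pythagoras_support hUo hU hψ hψE hh hw hwU hwψ
  have hzero : ∀ᵐ x ∂μ, x ∈ U \ Function.support w →
      ‖∇ ψ x - ∇ h x‖ ^ 2 + ‖∇ h x‖ ^ 2 = ‖∇ ψ x‖ ^ 2 := by
    filter_upwards [ae_gradient_sub (μ := μ) hUo hψ (hh₁.differentiableOn one_ne_zero),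
      ae_fderiv_eq_zero_of_eq_zero (μ := μ) (f := ψ - h) hUo
        (hψ.sub (locallyLipschitzOn_of_contDiffOn hUo hh₁))] with x hsub hfderiv hx
    have hψh : (ψ - h) x = 0 := by rw [← hwψ hx.1, Function.notMem_support.1 hx.2]
    have hgrad : ∇ ψ x - ∇ h x = 0 := by
      rw [← hsub hx.1, gradient, hfderiv hx.1 hψh, map_zero]
    rw [hgrad, sub_eq_zero.1 hgrad, norm_zero, zero_pow two_ne_zero, zero_add]
  exact integrableOn_and_setIntegral_eq_of_ae_eq_diff hUo.measurableSet
    (measurableSet_support hw.measurable) hwU hψE hint heq hzero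

theorem harmonic_replacement_energy_inequality_general (hUo : IsOpen U)
    (hU : Bornology.IsBounded U) (hψc : ContinuousOn ψ (closure U)) (hψ : LocallyLipschitzOn U ψ)
    (hψE : IntegrableOn (‖fderiv ℝ ψ ·‖ ^ 2) U μ) (hhc : ContinuousOn h (closure U))
    (hh : HarmonicOnNhd h U) (hψh : EqOn h ψ (frontier U)) :
    IntegrableOn (‖fderiv ℝ h ·‖ ^ 2) U μ ∧
      IntegrableOn (fun x ↦ ‖fderiv ℝ ψ x - fderiv ℝ h x‖ ^ 2) U μ ∧
      ∫ x in U, ‖fderiv ℝ ψ x - fderiv ℝ h x‖ ^ 2 ∂μ =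
        ∫ x in U, (‖fderiv ℝ ψ x‖ ^ 2 - ‖fderiv ℝ h x‖ ^ 2) ∂μ := by
  simp only [← norm_gradient, ← norm_gradient_sub_gradient] at hψE ⊢
  have hw : Continuous (U.indicator (ψ - h)) :=
    continuous_indicator (fun x hx ↦ sub_eq_zero.2 (hψh hx).symm) (hψc.sub hhc)
  obtain ⟨hint, heq⟩ := gradient_pythagoras hUo hU hψ hψE hh hw
    support_indicator_subset (eqOn_indicator (f := ψ - h))
  have hhE : IntegrableOn (‖∇ h ·‖ ^ 2) U μ :=
    hint.mono' ((measurable_gradient h).norm.pow_const 2).aestronglyMeasurable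
      (ae_of_all _ fun x ↦ by simp)
  have hsubE : IntegrableOn (fun x ↦ ‖∇ ψ x - ∇ h x‖ ^ 2) U μ :=
    hint.mono' (((measurable_gradient ψ).sub (measurable_gradient h)).norm.pow_const
      2).aestronglyMeasurable (ae_of_all _ fun x ↦ by simp)
  refine ⟨hhE, hsubE, ?_⟩
  rw [integral_sub hψE hhE, ← heq, integral_add hsubE hhE, add_sub_cancel_right]

end Energy

theorem integrableOn_norm_fderiv_sq_of_lipschitzOnWith {E F : Type*} [NormedAddCommGroup E]
    [NormedSpace ℝ E] [MeasurableSpace E] [OpensMeasurableSpace E] [NormedAddCommGroup F]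
    [NormedSpace ℝ F] [CompleteSpace F] {μ : Measure E} {f : E → F} {U : Set E} {K : ℝ≥0}
    (hU : IsOpen U) (hμU : μ U < ⊤) (hf : LipschitzOnWith K f U) :
    IntegrableOn (‖fderiv ℝ f ·‖ ^ 2) U μ := by
  refine Measure.integrableOn_of_bounded (M := K ^ 2) hμU.ne
    ((measurable_fderiv ℝ f).norm.pow_const 2).aestronglyMeasurable
    ((ae_restrict_iff' hU.measurableSet).2 (ae_of_all _ fun x hx ↦ ?_))
  rw [norm_pow, norm_norm]
  gcongr
  exact norm_fderiv_le_of_lipschitzOn ℝ (hU.mem_nhds hx) hf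

theorem IsHarmRep.harmonicOnNhd {n : ℕ} {ψ h : EuclideanSpace ℝ (Fin n) → ℝ}
    {x₀ : EuclideanSpace ℝ (Fin n)} {R : ℝ} (hh : IsHarmRep n ψ h x₀ R) :
    HarmonicOnNhd h (ball x₀ R) := by
  have hΔ : ∀ x ∈ ball x₀ R, Δ h x = 0 := fun x hx ↦ by
    simpa [laplacian_eq_iteratedFDeriv_orthonormalBasis h (EuclideanSpace.basisFun (Fin n) ℝ),
      iteratedFDeriv_two_apply] using hh.2.2.1 x hx
  intro x hx
  exact ⟨hh.2.1.contDiffAt (isOpen_ball.mem_nhds hx),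
    eventually_of_mem (isOpen_ball.mem_nhds hx) hΔ⟩

/-- There is `c > 0` depending only on `n` such that for any `ψ` Lipschitz
on `B̄_R` and any harmonic replacement `h` of `ψ` in `B_R` with finite Dirichlet energy,
`c ∫_{B_R} ‖Dψ − Dh‖² ≤ ∫_{B_R} (‖Dψ‖² − ‖Dh‖²)`. -/
theorem harmonic_replacement_energy_inequality (n : ℕ) (hn : 2 ≤ n) :
    ∃ c > (0:ℝ), ∀ (R : ℝ), 0 < R →
      ∀ ψ h : EuclideanSpace ℝ (Fin n) → ℝ,
        (∃ K, LipschitzOnWith K ψ (closedBall (0 : EuclideanSpace ℝ (Fin n)) R)) →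
        IsHarmRep n ψ h 0 R →
        IntegrableOn (fun x => ‖fderiv ℝ h x‖^2)
          (ball (0 : EuclideanSpace ℝ (Fin n)) R) volume →
        c * (∫ x in ball (0 : EuclideanSpace ℝ (Fin n)) R, ‖fderiv ℝ ψ x - fderiv ℝ h x‖^2) ≤
          ∫ x in ball (0 : EuclideanSpace ℝ (Fin n)) R, (‖fderiv ℝ ψ x‖^2 - ‖fderiv ℝ h x‖^2) := by
  refine ⟨1, one_pos, fun R hR ψ h ⟨K, hψ⟩ hh _ ↦ ?_⟩
  have hψB : LipschitzOnWith K ψ (ball 0 R) := hψ.mono ball_subset_closedBall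
  have hcl : closedBall (0 : EuclideanSpace ℝ (Fin n)) R = closure (ball 0 R) :=
    (closure_ball _ hR.ne').symm
  have hfr : frontier (ball (0 : EuclideanSpace ℝ (Fin n)) R) = sphere 0 R := frontier_ball _ hR.ne'
  rw [one_mul]
  exact (harmonic_replacement_energy_inequality_general isOpen_ball isBounded_ball
    (hcl ▸ hψ.continuousOn) (fun _ _ ↦ ⟨K, ball 0 R, self_mem_nhdsWithin, hψB⟩)
    (integrableOn_norm_fderiv_sq_of_lipschitzOnWith isOpen_ball measure_ball_lt_top hψB)
    (hcl ▸ hh.1) hh.harmonicOnNhd (hfr ▸ hh.2.2.2)).2.2.le
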